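/- Let W be a group acting by automorphisms on an abelian group A, let B be a subgroup of A fixed pointwise by W, let χ ∈ A, and let W_Q = {w ∈ W : w • χ − χ ∈ B}. Then: (i) the map w ↦ w • χ − χ on W_Q is independent of the representative of the coset, i.e. for every χ' ∈ A with χ' − χ ∈ B and every w ∈ W_Q one has w • χ' − χ' = w • χ − χ; (ii) consequently Stab_W(χ') = Stab_W(χ) for every χ' in the coset χ + B; and (iii) Stab_W(χ) is a normal subgroup of W_Q and the quotient group W_Q / Stab_W(χ) embeds into B (in particular it is abelian, and finite if B is finite). -/

import Mathlib

/-!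
The map `w ↦ w • χ - χ` is a 1-cocycle of `W` with values in `A`. On the elements `w` with
`w • χ - χ ∈ B` it takes values in `B`, where `W` acts trivially, so there the cocycle identity
says that it is a homomorphism (`smul_mul_sub_of_mem`). Its kernel is the stabilizer of `χ`,
and the first isomorphism theorem gives the embedding of the quotient into `B`. Replacing `χ`
by `χ + b` with `b ∈ B` changes the cocycle by `w • b - b = 0` (`smul_sub_eq_of_sub_mem`).
-/

section Cocycle

variable {W A : Type*} [Group W] [AddCommGroup A] [DistribMulAction W A]
  {B : AddSubgroup A}

/-- The cocycle `w ↦ w • χ - χ` depends only on the coset `χ + B`; this holds for all `w : W`. -/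
lemma smul_sub_eq_of_sub_mem (hB : ∀ (w : W), ∀ b ∈ B, w • b = b) {χ χ' : A}
    (h : χ' - χ ∈ B) (w : W) : w • χ' - χ' = w • χ - χ := by
  have h1 := hB w _ h
  rw [smul_sub, sub_eq_sub_iff_sub_eq_sub] at h1
  exact h1

/-- The cocycle identity, in the case where `v` acts trivially on `w • χ - χ`. -/
lemma smul_mul_sub_of_mem (hB : ∀ (w : W), ∀ b ∈ B, w • b = b) {χ : A} (v : W) {w : W}
    (hw : w • χ - χ ∈ B) : (v * w) • χ - χ = (v • χ - χ) + (w • χ - χ) := by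
  have h1 := hB v _ hw
  rw [smul_sub, smul_smul] at h1
  rw [← h1]
  abel

/-- The group `W_Q` of elements that move `χ` within the coset `χ + B`. -/
def cosetStabilizer (hB : ∀ (w : W), ∀ b ∈ B, w • b = b) (χ : A) : Subgroup W where
  carrier := {w | w • χ - χ ∈ B}
  one_mem' := by simp
  mul_mem' {v w} hv hw := by
    rw [Set.mem_ofPred_eq, smul_mul_sub_of_mem hB v hw]
    exact B.add_mem hv hw
  inv_mem' {w} hw := by
    -- `w⁻¹` fixes `w • χ - χ ∈ B`, hence `w⁻¹ • χ - χ = -(w • χ - χ)`.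
    have h1 := hB w⁻¹ _ hw
    rw [smul_sub, inv_smul_smul] at h1
    have h2 : w⁻¹ • χ - χ = -(w • χ - χ) := by rw [← h1, neg_sub]
    rw [Set.mem_ofPred_eq, h2]
    exact B.neg_mem hw

/-- The cocycle `w ↦ w • χ - χ` restricted to `W_Q`, as a homomorphism to `B`. -/
def cosetHom (hB : ∀ (w : W), ∀ b ∈ B, w • b = b) (χ : A) :
    cosetStabilizer hB χ →* Multiplicative B :=
  MonoidHom.mk' (fun w => Multiplicative.ofAdd ⟨(w : W) • χ - χ, w.2⟩) fun v w =>
    congrArg Multiplicative.ofAdd (Subtype.ext (smul_mul_sub_of_mem hB (v : W) w.2))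

lemma mem_ker_cosetHom (hB : ∀ (w : W), ∀ b ∈ B, w • b = b) (χ : A)
    (w : cosetStabilizer hB χ) : w ∈ (cosetHom hB χ).ker ↔ (w : W) • χ = χ := by
  rw [MonoidHom.mem_ker, ← sub_eq_zero (a := (w : W) • χ)]
  exact Subtype.ext_iff (a1 := (⟨(w : W) • χ - χ, w.2⟩ : B)) (a2 := 0)

end Cocycle

/-- Let `W` be a group acting by automorphisms on an abelian group `A`, let `B` be a
subgroup of `A` fixed pointwise by `W`, let `χ ∈ A`, and let
`W_Q = {w : W | w • χ - χ ∈ B}`.  Then: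
(i) for every `χ'` in the coset `χ + B` and every `w ∈ W_Q` one has
    `w • χ' - χ' = w • χ - χ`;
(ii) consequently the stabilizer of `χ'` equals the stabilizer of `χ` for every `χ'`
     in the coset `χ + B`;
(iii) the stabilizer of `χ` is a normal subgroup of `W_Q` and the quotient group
      embeds into `B`. -/
theorem statement1 {W A : Type*} [Group W] [AddCommGroup A] [DistribMulAction W A]
    (B : AddSubgroup A) (hB : ∀ (w : W), ∀ b ∈ B, w • b = b) (χ : A) :
    (∀ χ' : A, χ' - χ ∈ B → ∀ w : W, w • χ - χ ∈ B → w • χ' - χ' = w • χ - χ) ∧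
    (∀ χ' : A, χ' - χ ∈ B → ∀ w : W, (w • χ' = χ' ↔ w • χ = χ)) ∧
    ∃ H : Subgroup W, (H : Set W) = {w : W | w • χ - χ ∈ B} ∧
      ∃ K : Subgroup H, (K : Set H) = {w : H | (w : W) • χ = χ} ∧
        ∃ _ : K.Normal, ∃ φ : H ⧸ K →* Multiplicative B, Function.Injective φ := by
  refine ⟨fun χ' h w _ => smul_sub_eq_of_sub_mem hB h w, fun χ' h w => ?_,
    cosetStabilizer hB χ, rfl, (cosetHom hB χ).ker, Set.ext (mem_ker_cosetHom hB χ),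
    inferInstance, QuotientGroup.kerLift _, QuotientGroup.kerLift_injective _⟩
  rw [← sub_eq_zero, smul_sub_eq_of_sub_mem hB h w, sub_eq_zero]
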